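/- arXiv:1811.01229 — 2 statements merged into one kernel-verified Lean document; each statement's English description precedes it below -/
import Mathlib

section
/- Let m ≥ 1 and let a_1, …, a_{2m} be positive integers, and let R = [[1,1],[0,1]]. Then R · M⁺(a_1, …, a_{2m}) · R^{−1} = M(a_1+2, 2^{(a_2−1)}, a_3+2, 2^{(a_4−1)}, …, a_{2m−1}+2, 2^{(a_{2m}−1)}); in particular, M⁺(a_1, …, a_{2m}) is conjugate in SL(2,ℤ) to M(a_1+2, 2^{(a_2−1)}, …, a_{2m−1}+2, 2^{(a_{2m}−1)}). -/
/-- `M(c₁, …, c_n) = [[c₁,−1],[1,0]] ⋯ [[c_n,−1],[1,0]]`. -/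
def Mneg (cs : List ℤ) : Matrix (Fin 2) (Fin 2) ℤ :=
  (cs.map fun c => !![c, -1; 1, 0]).prod

/-- `M⁺(a₁, …, a_k) = [[a₁,1],[1,0]] ⋯ [[a_k,1],[1,0]]`. -/
def Mpos (as : List ℤ) : Matrix (Fin 2) (Fin 2) ℤ :=
  (as.map fun a => !![a, 1; 1, 0]).prod

/-- The conversion `(a₁, a₂, a₃, a₄, …) ↦ (a₁+2, 2^(a₂−1), a₃+2, 2^(a₄−1), …)`. -/
def hzConj : List ℤ → List ℤ
  | [] => []
  | [a] => [a + 2]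
  | a :: b :: l => (a + 2) :: (List.replicate (b - 1).toNat 2 ++ hzConj l)

theorem pow_aux (t : ℕ) : (!![2, -1; 1, 0] : Matrix (Fin 2) (Fin 2) ℤ) ^ t
    = !![(t : ℤ) + 1, -t; t, 1 - t] := by
  induction t with
  | zero => simp [Matrix.one_fin_two]
  | succ k ih =>
    rw [pow_succ, ih, Matrix.mul_fin_two]
    push_cast
    congr 1
    ext i j
    fin_cases i <;> fin_cases j <;> simp <;> ring

theorem conj_aux (m : ℕ) : ∀ (a : List ℤ), a.length = 2 * m → (∀ x ∈ a, 1 ≤ x) →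
    !![1, 1; 0, 1] * Mpos a = Mneg (hzConj a) * (!![1, 1; 0, 1] : Matrix (Fin 2) (Fin 2) ℤ) := by
  induction m with
  | zero =>
    intro a h _
    have : a = [] := List.length_eq_zero_iff.mp (by simpa using h)
    subst this
    simp [Mpos, Mneg, hzConj]
  | succ k ih =>
    intro a h ha
    match a, h, ha with
    | [], h, _ => simp at h
    | [x], h, _ => simp at h; omega
    | x :: y :: l, h, ha =>
      have hl : l.length = 2 * k := by simp at h; omega
      have e := ih l hl (fun z hz => ha z (by simp [hz]))
      have hy : 1 ≤ y := ha y (by simp)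
      have ht : (((y - 1).toNat : ℕ) : ℤ) = y - 1 := Int.toNat_of_nonneg (by omega)
      have hp : Mpos (x :: y :: l) = !![x, 1; 1, 0] * (!![y, 1; 1, 0] * Mpos l) := by
        simp [Mpos]
      have hn : Mneg (hzConj (x :: y :: l)) =
          !![x + 2, -1; 1, 0] * (!![2, -1; 1, 0] ^ (y - 1).toNat * Mneg (hzConj l)) := by
        simp only [Mneg, hzConj, List.map_cons, List.prod_cons, List.map_append,
          List.prod_append, List.map_replicate, List.prod_replicate]
      have key : (!![1, 1; 0, 1] : Matrix (Fin 2) (Fin 2) ℤ) * !![x, 1; 1, 0] * !![y, 1; 1, 0]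
          = !![x + 2, -1; 1, 0] * !![2, -1; 1, 0] ^ (y - 1).toNat * !![1, 1; 0, 1] := by
        rw [pow_aux, ht]
        simp only [Matrix.mul_fin_two]
        ext i j
        fin_cases i <;> fin_cases j <;> simp <;> ring
      rw [hp, hn]
      simp only [← Matrix.mul_assoc]
      rw [key]
      simp only [Matrix.mul_assoc]
      rw [e]

/-- for positive integers `a₁, …, a_{2m}` (`m ≥ 1`) and
`R = [[1,1],[0,1]]`,
`R · M⁺(a₁, …, a_{2m}) · R⁻¹ = M(a₁+2, 2^(a₂−1), a₃+2, 2^(a₄−1), …, a_{2m−1}+2, 2^(a_{2m}−1))`,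
so that `M⁺(a₁, …, a_{2m})` is conjugate in `SL(2,ℤ)` to the latter matrix. -/
theorem stmt6 (m : ℕ) (hm : 1 ≤ m) (a : List ℤ) (hlen : a.length = 2 * m)
    (ha : ∀ x ∈ a, 1 ≤ x) :
    !![1, 1; 0, 1] * Mpos a * (!![1, 1; 0, 1] : Matrix (Fin 2) (Fin 2) ℤ)⁻¹
      = Mneg (hzConj a) := by
  rw [conj_aux m a hlen ha, Matrix.mul_assoc, Matrix.mul_nonsing_inv, Matrix.mul_one]
  simp [Matrix.det_fin_two]
end

section
/- Let m ≥ 1 and let a_1, …, a_{2m} be positive integers. Set (c_1, …, c_k) = (a_1+1, 2^{(a_2−1)}, a_3+2, 2^{(a_4−1)}, …, a_{2m−1}+2, 2^{(a_{2m}−1)}) and (d_1, …, d_ℓ) = (a_{2m}+1, 2^{(a_{2m−1}−1)}, a_{2m−2}+2, 2^{(a_{2m−3}−1)}, …, a_2+2, 2^{(a_1−1)}) (the same construction applied to the reversed sequence). Then M(c_1, …, c_k, 1, d_1, …, d_ℓ, 1) = −Id, where Id is the 2×2 identity matrix. (This is the statement that the quiddity of the triangulation 𝕋_{r/s} associated to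 the rational r/s = [a_1,…,a_{2m}] satisfies M(c_1,…,c_n) = −Id.) -/
/-- Auxiliary: converts `(a₁, a₂, a₃, …)` to `(a₁+2, 2^(a₂−1), a₃+2, 2^(a₄−1), …)`. -/
def hzTail : List ℤ → List ℤ
  | [] => []
  | [a] => [a + 2]
  | a :: b :: l => (a + 2) :: (List.replicate (b - 1).toNat 2 ++ hzTail l)

/-- The Hirzebruch conversion:
`(a₁, a₂, a₃, a₄, …) ↦ (a₁+1, 2^(a₂−1), a₃+2, 2^(a₄−1), …)`. -/
def hz : List ℤ → List ℤ
  | [] => []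
  | [a] => [a + 1]
  | a :: b :: l => (a + 1) :: (List.replicate (b - 1).toNat 2 ++ hzTail l)

def PP : List ℤ → Matrix (Fin 2) (Fin 2) ℤ
  | [] => 1
  | [_] => 1
  | x :: y :: l => !![1 + x * y, x; y, 1] * PP l

theorem Mneg_append (l k : List ℤ) : Mneg (l ++ k) = Mneg l * Mneg k := by
  simp [Mneg]

theorem Mneg_cons (c : ℤ) (k : List ℤ) : Mneg (c :: k) = !![c, -1; 1, 0] * Mneg k := by
  simp [Mneg]

theorem Mneg_nil : Mneg [] = 1 := by
  simp [Mneg]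

theorem Mneg_rep (n : ℕ) :
    Mneg (List.replicate n 2) = !![1 + (n : ℤ), -(n : ℤ); (n : ℤ), 1 - (n : ℤ)] := by
  induction n with
  | zero => simp [Mneg, Matrix.one_fin_two]
  | succ k ih =>
    rw [List.replicate_succ, Mneg_cons, ih, Matrix.mul_fin_two]
    push_cast
    congr 1
    ext i j
    fin_cases i <;> fin_cases j <;> simp <;> ring

theorem Mneg_rep' (b : ℤ) (hb : 1 ≤ b) :
    Mneg (List.replicate (b - 1).toNat 2) = !![b, 1 - b; b - 1, 2 - b] := by
  have h : (((b - 1).toNat : ℕ) : ℤ) = b - 1 := Int.toNat_of_nonneg (by omega)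
  rw [Mneg_rep, h]
  ext i j
  fin_cases i <;> fin_cases j <;> simp <;> ring

theorem hzTail_PP : (m : ℕ) → (a : List ℤ) → a.length = 2 * m → (∀ x ∈ a, 1 ≤ x) →
    Mneg (hzTail a) = !![1, 1; 0, 1] * PP a * !![1, -1; 0, 1]
  | m, [], _, _ => by
    simp [hzTail, PP, Mneg_nil, Matrix.one_fin_two]
  | m, [_], h, _ => by simp at h; omega
  | m, x :: y :: l, h, ha => by
    have hy : 1 ≤ y := ha y (by simp)
    have ih := hzTail_PP (m - 1) l (by simp at h; omega) (fun z hz => ha z (by simp [hz]))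
    rw [hzTail, Mneg_cons, Mneg_append, ih, Mneg_rep' y hy, PP]
    simp only [← mul_assoc]
    congr 2
    simp only [Matrix.mul_fin_two]
    ext i j
    fin_cases i <;> fin_cases j <;> simp <;> ring

theorem hz_PP (m : ℕ) (hm : 1 ≤ m) (a : List ℤ) (h : a.length = 2 * m)
    (ha : ∀ x ∈ a, 1 ≤ x) : Mneg (hz a) = PP a * !![1, -1; 0, 1] := by
  match a, h, ha with
  | [], h, _ => simp at h; omega
  | [_], h, _ => simp at h; omega
  | x :: y :: l, h, ha =>
    have hy : 1 ≤ y := ha y (by simp)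
    have ih := hzTail_PP (m - 1) l (by simp at h; omega) (fun z hz => ha z (by simp [hz]))
    rw [hz, Mneg_cons, Mneg_append, ih, Mneg_rep' y hy, PP]
    simp only [← mul_assoc]
    congr 2
    simp only [Matrix.mul_fin_two]
    ext i j
    fin_cases i <;> fin_cases j <;> simp <;> ring

theorem PP_append : (m : ℕ) → (a : List ℤ) → a.length = 2 * m → (k : List ℤ) →
    PP (a ++ k) = PP a * PP k
  | m, [], _, k => by simp [PP]
  | m, [_], h, _ => by simp at h; omega
  | m, x :: y :: l, h, k => by
    have ih := PP_append (m - 1) l (by simp at h; omega) k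
    simp only [List.cons_append, PP, ih, mul_assoc]

theorem PP_rev : (m : ℕ) → (a : List ℤ) → a.length = 2 * m →
    PP a * !![0, -1; 1, 0] * PP a.reverse = !![0, -1; 1, 0]
  | m, [], _ => by simp [PP]
  | m, [_], h => by simp at h; omega
  | m, x :: y :: l, h => by
    have hl : l.length = 2 * (m - 1) := by simp at h; omega
    have ih := PP_rev (m - 1) l hl
    have e : (x :: y :: l).reverse = l.reverse ++ [y, x] := by simp
    rw [e, PP_append (m - 1) _ (by simpa using hl), PP, PP, PP, mul_one]
    calc _ = !![1 + x * y, x; y, 1] * (PP l * !![0, -1; 1, 0] * PP l.reverse)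
          * !![1 + y * x, y; x, 1] := by simp only [mul_assoc]
      _ = _ := by
        rw [ih]
        simp only [Matrix.mul_fin_two]
        ext i j
        fin_cases i <;> fin_cases j <;> simp <;> ring

/-- for positive integers `a₁, …, a_{2m}` (`m ≥ 1`), letting
`(c₁, …, c_k) = (a₁+1, 2^(a₂−1), a₃+2, …, a_{2m−1}+2, 2^(a_{2m}−1))` and
`(d₁, …, d_ℓ)` the same construction applied to the reversed sequence
`(a_{2m}, …, a₁)`, one has `M(c₁, …, c_k, 1, d₁, …, d_ℓ, 1) = −Id`. -/
theorem stmt7 (m : ℕ) (hm : 1 ≤ m) (a : List ℤ) (hlen : a.length = 2 * m)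
    (ha : ∀ x ∈ a, 1 ≤ x) :
    Mneg (hz a ++ [1] ++ hz a.reverse ++ [1]) = -1 := by
  have hS : !![1, -1; 0, 1] * Mneg [1] = !![0, -1; 1, 0] := by
    simp [Mneg]
  rw [Mneg_append, Mneg_append, Mneg_append, hz_PP m hm a hlen ha,
    hz_PP m hm a.reverse (by simpa using hlen) (by simpa using ha)]
  calc _ = (PP a * (!![1, -1; 0, 1] * Mneg [1]) * PP a.reverse)
        * (!![1, -1; 0, 1] * Mneg [1]) := by simp only [mul_assoc]
    _ = -1 := by
      rw [hS, PP_rev m a hlen]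
      simp [Matrix.one_fin_two]
end
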